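/- arXiv:1807.07890 — 6 statements merged into one kernel-verified Lean document; each statement's English description precedes it below -/
import Mathlib

section
/- For every integer b ≥ 2 and every complex number s with Re(s) > 1, the Dirichlet series ∑_{n=1}^∞ (d_b(n) - d_b(n-1)) n^{-s} converges absolutely and equals ((b^s - b)/(b^s - 1)) · ζ(s). -/
noncomputable section

/-- The base-`b` digit sum of `n`. -/
def digitSum (b n : ℕ) : ℕ := (Nat.digits b n).sum

/-!
Passing from `n - 1` to `n` turns a block of `v_b(n)` trailing digits `b - 1` into zeros and raises
the next digit by one, so `d_b(n) - d_b(n - 1) = 1 - (b - 1) v_b(n)`, where `v_b(n)` is the exponent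
of the largest power of `b` dividing `n`. Since `v_b(n) ≤ log n / log b`, the series
`V(s) = ∑ v_b(n) n^{-s}` converges absolutely for `Re s > 1`. As `v_b` vanishes off the multiples of
`b` and `v_b(b m) = v_b(m) + 1`, it satisfies `V(s) = b^{-s} (V(s) + ζ(s))`, that is,
`V(s) = ζ(s) / (b^s - 1)`.
-/

open LSeries

section DigitSum

variable {b : ℕ}

theorem digitSum_add_mul (hb : 1 < b) {r : ℕ} (hr : r < b) (m : ℕ) :
    digitSum b (r + b * m) = r + digitSum b m := by
  by_cases h : r = 0 ∧ m = 0
  · simp [digitSum, h]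
  · simp [digitSum, Nat.digits_add b hb r m hr (by tauto)]

theorem digitSum_succ_sub_digitSum (hb : 1 < b) (n : ℕ) :
    (digitSum b (n + 1) : ℤ) - digitSum b n = 1 - (b - 1) * padicValNat b (n + 1) := by
  induction n using Nat.strong_induction_on with
  | _ n ih =>
    let r := n % b
    let k := n / b
    have hn : n = r + b * k := (Nat.mod_add_div n b).symm
    have hr : r < b := Nat.mod_lt n (by lia)
    have digitSum_n : digitSum b n = r + digitSum b k := by rw [hn, digitSum_add_mul hb hr]
    rcases (Nat.succ_le_of_lt hr).lt_or_eq with no_carry | carry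
    · have hn' : n + 1 = (r + 1) + b * k := by lia
      have not_dvd : ¬ b ∣ n + 1 := by
        rw [hn', Nat.dvd_add_left (dvd_mul_right b k)]
        exact Nat.not_dvd_of_pos_of_lt r.succ_pos no_carry
      rw [padicValNat.eq_zero_of_not_dvd not_dvd, hn', digitSum_add_mul hb no_carry, digitSum_n]
      lia
    · have hn' : n + 1 = b * (k + 1) := by lia
      have hk : k < n := by nlinarith
      have digitSum_succ : digitSum b (n + 1) = digitSum b (k + 1) := by
        simpa [hn'] using digitSum_add_mul hb (r := 0) (by lia) (k + 1)
      rw [digitSum_succ, hn', padicValNat_base_mul hb k.succ_ne_zero, digitSum_n]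
      have r_eq : (r : ℤ) = b - 1 := by lia
      simp only [Nat.cast_add, Nat.cast_one]
      linear_combination ih k hk - r_eq

end DigitSum

theorem natCast_cpow_ne_one {n : ℕ} (hn : 1 < n) {s : ℂ} (hs : s.re ≠ 0) : (n : ℂ) ^ s ≠ 1 := by
  intro h
  have rpow_eq : (n : ℝ) ^ s.re = (n : ℝ) ^ (0 : ℝ) := by
    rw [← Complex.norm_natCast_cpow_of_pos (by lia), h, norm_one, Real.rpow_zero]
  exact hs ((Real.rpow_right_inj (by positivity) (by exact_mod_cast hn.ne')).1 rpow_eq)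

section LSeries

variable {b : ℕ} {s : ℂ}

theorem LSeries_eq_cpow_neg_mul_of_forall_not_dvd (hb : b ≠ 0) {f : ℕ → ℂ}
    (hf : ∀ n, ¬ b ∣ n → f n = 0) :
    LSeries f s = (b : ℂ) ^ (-s) * LSeries (fun m ↦ f (b * m)) s := by
  have support_subset : Function.support (term f s) ⊆ Set.range (b * ·) := by
    intro n hn
    by_contra hmem
    have not_dvd : ¬ b ∣ n := fun ⟨m, hm⟩ ↦ hmem ⟨m, hm.symm⟩
    simp [term_def, hf n not_dvd] at hn
  have term_mul (m : ℕ) : term f s (b * m) = (b : ℂ) ^ (-s) * term (fun m ↦ f (b * m)) s m := by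
    rcases eq_or_ne m 0 with rfl | hm
    · simp
    · rw [term_of_ne_zero (mul_ne_zero hb hm), term_of_ne_zero hm, Nat.cast_mul,
        Complex.natCast_mul_natCast_cpow, Complex.cpow_neg]
      ring
  rw [LSeries, ← (mul_right_injective₀ hb).tsum_eq support_subset, LSeries, ← tsum_mul_left]
  exact tsum_congr term_mul

variable (b) in
theorem LSeriesSummable_padicValNat (hs : 1 < s.re) :
    LSeriesSummable (fun n ↦ (padicValNat b n : ℂ)) s := by
  have log_summable : LSeriesSummable ((Real.log b : ℂ)⁻¹ • logMul 1) s :=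
    (LSeriesSummable_logMul_of_lt_re <| by
      rw [abscissaOfAbsConv_one]; exact_mod_cast hs).smul _
  refine .of_norm_bounded log_summable.norm fun n ↦ norm_term_le s ?_
  calc ‖(padicValNat b n : ℂ)‖ = padicValNat b n := Complex.norm_natCast _
    _ ≤ Nat.log b n := by exact_mod_cast padicValNat_le_nat_log n
    _ ≤ Real.logb b n := Real.natLog_le_logb n b
    _ ≤ ‖Real.logb b n‖ := Real.le_norm_self _
    _ = ‖((Real.log b : ℂ)⁻¹ • logMul 1) n‖ := by
      simp [logMul, ← Complex.natCast_log, Real.logb, div_eq_inv_mul]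

theorem LSeries_padicValNat (hb : 1 < b) (hs : 1 < s.re) :
    LSeries (fun n ↦ (padicValNat b n : ℂ)) s = riemannZeta s / ((b : ℂ) ^ s - 1) := by
  let V := LSeries (fun n ↦ (padicValNat b n : ℂ)) s
  have functional_eq : V = (b : ℂ) ^ (-s) * (V + riemannZeta s) :=
    calc V = (b : ℂ) ^ (-s) * LSeries (fun m ↦ (padicValNat b (b * m) : ℂ)) s :=
          LSeries_eq_cpow_neg_mul_of_forall_not_dvd (by lia)
            (fun n hn ↦ by rw [padicValNat.eq_zero_of_not_dvd hn, Nat.cast_zero])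
      _ = (b : ℂ) ^ (-s) * LSeries ((fun m ↦ (padicValNat b m : ℂ)) + 1) s :=
          congrArg _ (LSeries_congr (fun hm ↦ by simp [padicValNat_base_mul hb hm]) s)
      _ = (b : ℂ) ^ (-s) * (V + riemannZeta s) := by
          rw [LSeries_add (LSeriesSummable_padicValNat b hs) (LSeriesSummable_one_iff.2 hs),
            LSeries_one_eq_riemannZeta hs]
  have cpow_ne_zero : (b : ℂ) ^ s ≠ 0 := by
    rw [Ne, Complex.cpow_eq_zero_iff, Nat.cast_eq_zero]; lia
  have cpow_ne_one := natCast_cpow_ne_one hb (s := s) (by linarith)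
  rw [Complex.cpow_neg, eq_inv_mul_iff_mul_eq₀ cpow_ne_zero] at functional_eq
  rw [eq_div_iff (sub_ne_zero.2 cpow_ne_one)]
  linear_combination functional_eq

theorem LSeriesHasSum_one_sub_smul_padicValNat (hb : 1 < b) (hs : 1 < s.re) :
    LSeriesHasSum (1 - ((b : ℂ) - 1) • fun n ↦ (padicValNat b n : ℂ)) s
      (((b : ℂ) ^ s - b) / ((b : ℂ) ^ s - 1) * riemannZeta s) := by
  have one_summable := LSeriesSummable_one_iff.2 hs
  have val_summable := (LSeriesSummable_padicValNat b hs).smul ((b : ℂ) - 1)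
  convert (one_summable.sub val_summable).LSeriesHasSum using 1
  have cpow_sub_one_ne_zero := sub_ne_zero.2 (natCast_cpow_ne_one hb (s := s) (by linarith))
  rw [LSeries_sub one_summable val_summable, LSeries_smul, LSeries_padicValNat hb hs,
    LSeries_one_eq_riemannZeta hs]
  field_simp
  ring

end LSeries

theorem differenced_digitSum_dirichlet_eq
    (b : ℕ) (hb : 2 ≤ b) (s : ℂ) (hs : 1 < s.re) :
    Summable (fun n : ℕ =>
      ‖(((digitSum b (n + 1) : ℤ) - (digitSum b n : ℤ) : ℤ) : ℂ) * ((n + 1 : ℕ) : ℂ) ^ (-s)‖) ∧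
    (∑' n : ℕ,
        (((digitSum b (n + 1) : ℤ) - (digitSum b n : ℤ) : ℤ) : ℂ) * ((n + 1 : ℕ) : ℂ) ^ (-s)) =
      (Complex.exp (s * Real.log b) - b) / (Complex.exp (s * Real.log b) - 1)
        * riemannZeta s := by
  have cpow_eq_exp : (b : ℂ) ^ s = Complex.exp (s * Real.log b) := by
    rw [Complex.cpow_def_of_ne_zero (by norm_cast; lia), Complex.natCast_log, mul_comm]
  let f : ℕ → ℂ := 1 - ((b : ℂ) - 1) • fun n ↦ (padicValNat b n : ℂ)
  have digitSum_diff (n : ℕ) :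
      (((digitSum b (n + 1) : ℤ) - (digitSum b n : ℤ) : ℤ) : ℂ) = f (n + 1) := by
    simp [f, digitSum_succ_sub_digitSum hb]
  have hf := LSeriesHasSum_one_sub_smul_padicValNat hb hs
  have hasSum_succ := (hasSum_nat_add_iff' 1).2 hf
  simp only [Finset.sum_range_one, term_zero, sub_zero, term_of_ne_zero (Nat.succ_ne_zero _),
    div_eq_mul_inv, ← Complex.cpow_neg] at hasSum_succ
  simp only [digitSum_diff, ← cpow_eq_exp, div_eq_mul_inv]
  exact ⟨hasSum_succ.summable.norm, hasSum_succ.tsum_eq⟩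
end
end

section
/- For every integer b ≥ 2 and every complex number s with Re(s) > 0, the Dirichlet series ∑_{n=1}^∞ (d_b(n) - d_b(n-1)) n^{-s} converges, i.e. the partial sums ∑_{n=1}^N (d_b(n) - d_b(n-1)) n^{-s} tend to a limit as N → ∞. -/
open Filter Topology

noncomputable section

/-!
Summation by parts moves the difference from `d_b` onto the smooth factor `n ^ (-s)`, whose
differences are `O(n ^ (-Re s - 1))`. As `d_b(n) = O(log n) = O(n ^ r)` with `r = Re s / 2`, the
transformed series converges absolutely and the boundary term `d_b(N) N ^ (-s)` tends to `0`.
-/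

open Asymptotics

section SummationByParts

variable {R : Type*} [NonUnitalNonAssocRing R]

theorem sum_range_sub_mul_succ (a g : ℕ → R) (N : ℕ) :
    ∑ n ∈ Finset.range N, (a (n + 1) - a n) * g (n + 1) =
      a N * g N - a 0 * g 0 - ∑ n ∈ Finset.range N, a n * (g (n + 1) - g n) := by
  rw [eq_sub_iff_add_eq, ← Finset.sum_add_distrib, ← Finset.sum_range_sub (fun n ↦ a n * g n)]
  refine Finset.sum_congr rfl fun n _ ↦ ?_
  rw [sub_mul, mul_sub, sub_add_sub_cancel]

theorem tendsto_sum_range_sub_mul_succ [TopologicalSpace R] [IsTopologicalAddGroup R]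
    {a g : ℕ → R} {l : R} (hlim : Tendsto (fun n ↦ a n * g n) atTop (𝓝 l))
    (hsum : Summable fun n ↦ a n * (g (n + 1) - g n)) :
    Tendsto (fun N ↦ ∑ n ∈ Finset.range N, (a (n + 1) - a n) * g (n + 1)) atTop
      (𝓝 (l - a 0 * g 0 - ∑' n, a n * (g (n + 1) - g n))) := by
  simp only [sum_range_sub_mul_succ]
  exact (hlim.sub_const _).sub hsum.hasSum.tendsto_sum_nat

end SummationByParts

section DirichletSeries

theorem isBigO_natCast_cpow_atTop (z : ℂ) :
    (fun n : ℕ ↦ (n : ℂ) ^ z) =O[atTop] fun n : ℕ ↦ (n : ℝ) ^ z.re :=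
  .of_norm_left (Complex.norm_ofReal_cpow_eventually_eq_atTop z).isBigO.natCast_atTop

theorem isBigO_natCast_succ_cpow_sub_cpow_atTop (z : ℂ) :
    (fun n : ℕ ↦ ((n + 1 : ℕ) : ℂ) ^ z - (n : ℂ) ^ z) =O[atTop]
      fun n : ℕ ↦ (n : ℝ) ^ (z.re - 1) := by
  -- `(n + 1) ^ z - n ^ z = n ^ z * ((1 + n⁻¹) ^ z - 1)`, and `w ↦ w ^ z` is differentiable at `1`.
  have cpow_sub_one : (fun w : ℂ ↦ w ^ z - 1) =O[𝓝 1] fun w ↦ w - 1 := by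
    simpa using ((hasDerivAt_id (1 : ℂ)).cpow_const (c := z) (by simp)).isBigO_sub
  have ratio_tendsto : Tendsto (fun n : ℕ ↦ 1 + (n : ℂ)⁻¹) atTop (𝓝 1) := by
    simpa using tendsto_inv_atTop_nhds_zero_nat (𝕜 := ℂ) |>.const_add 1
  have ratio_cpow_sub_one :
      (fun n : ℕ ↦ (1 + (n : ℂ)⁻¹) ^ z - 1) =O[atTop] fun n : ℕ ↦ (n : ℝ)⁻¹ :=
    (cpow_sub_one.comp_tendsto ratio_tendsto).trans <| .of_bound' <| .of_forall fun n ↦ by simp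
  refine ((isBigO_natCast_cpow_atTop z).mul ratio_cpow_sub_one).congr' ?_ ?_
  · filter_upwards [eventually_ne_atTop 0] with n hn
    have succ_eq : ((n + 1 : ℕ) : ℂ) = ((n : ℝ) : ℂ) * ((1 + (n : ℝ)⁻¹ : ℝ) : ℂ) := by
      push_cast
      field_simp
    rw [succ_eq, Complex.mul_cpow_ofReal_nonneg (by positivity) (by positivity)]
    push_cast
    ring
  · filter_upwards [eventually_ne_atTop 0] with n hn
    rw [Real.rpow_sub_one (by exact_mod_cast hn), div_eq_mul_inv]

variable {a : ℕ → ℂ} {r : ℝ} {s : ℂ}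

theorem tendsto_mul_cpow_neg_nhds_zero_of_isBigO (ha : a =O[atTop] fun n ↦ (n : ℝ) ^ r)
    (hrs : r < s.re) :
    Tendsto (fun n ↦ a n * (n : ℂ) ^ (-s)) atTop (𝓝 0) := by
  have rpow_tendsto : Tendsto (fun n : ℕ ↦ (n : ℝ) ^ (-(s.re - r))) atTop (𝓝 0) :=
    (tendsto_rpow_neg_atTop (sub_pos.2 hrs)).comp tendsto_natCast_atTop_atTop
  exact (ha.mul_atTop_rpow_natCast_of_isBigO_rpow r (-s.re) _
    (isBigO_natCast_cpow_atTop (-s)) (by linarith)).trans_tendsto rpow_tendsto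

theorem summable_mul_cpow_neg_sub_of_isBigO (ha : a =O[atTop] fun n ↦ (n : ℝ) ^ r)
    (hrs : r < s.re) :
    Summable fun n ↦ a n * (((n + 1 : ℕ) : ℂ) ^ (-s) - (n : ℂ) ^ (-s)) :=
  summable_of_isBigO_nat (Real.summable_nat_rpow.2 (by linarith : r + (-s.re - 1) < -1))
    (ha.mul_atTop_rpow_natCast_of_isBigO_rpow r (-s.re - 1) _
      (isBigO_natCast_succ_cpow_sub_cpow_atTop (-s)) le_rfl)

theorem exists_tendsto_sum_range_sub_mul_cpow_neg_of_isBigO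
    (ha : a =O[atTop] fun n ↦ (n : ℝ) ^ r) (hrs : r < s.re) :
    ∃ L : ℂ, Tendsto
      (fun N ↦ ∑ n ∈ Finset.range N, (a (n + 1) - a n) * ((n + 1 : ℕ) : ℂ) ^ (-s))
      atTop (𝓝 L) :=
  ⟨_, tendsto_sum_range_sub_mul_succ (g := fun n ↦ (n : ℂ) ^ (-s))
    (tendsto_mul_cpow_neg_nhds_zero_of_isBigO ha hrs) (summable_mul_cpow_neg_sub_of_isBigO ha hrs)⟩

end DirichletSeries

section DigitSum

variable {b : ℕ}

theorem digitSum_le_mul_log_add_one (hb : 1 < b) (n : ℕ) :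
    digitSum b n ≤ (Nat.log b n + 1) * (b - 1) := by
  rcases eq_or_ne n 0 with rfl | hn
  · simp [digitSum]
  · rw [← Nat.length_digits b n hb hn]
    exact List.sum_le_card_nsmul _ _ fun _ hd ↦ Nat.le_sub_one_of_lt (Nat.digits_lt_base hb hd)

theorem isBigO_natLog_log_atTop (b : ℕ) :
    (fun n : ℕ ↦ (Nat.log b n : ℝ)) =O[atTop] fun n : ℕ ↦ Real.log n := by
  refine .of_bound (Real.log b)⁻¹ <| .of_forall fun n ↦ ?_
  rw [Real.norm_natCast, Real.norm_of_nonneg (Real.log_natCast_nonneg n), inv_mul_eq_div]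
  exact Real.natLog_le_logb n b

theorem isBigO_digitSum_log_atTop (hb : 1 < b) :
    (fun n ↦ (digitSum b n : ℝ)) =O[atTop] fun n : ℕ ↦ Real.log n := by
  have one_isBigO_log : (fun _ : ℕ ↦ (1 : ℝ)) =O[atTop] fun n : ℕ ↦ Real.log n :=
    (Real.isLittleO_const_log_atTop.comp_tendsto tendsto_natCast_atTop_atTop).isBigO
  refine .trans (.of_bound (b - 1 : ℕ) <| .of_forall fun n ↦ ?_)
    ((isBigO_natLog_log_atTop b).add one_isBigO_log)
  rw [Real.norm_natCast, Real.norm_of_nonneg (by positivity), mul_comm]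
  exact_mod_cast digitSum_le_mul_log_add_one hb n

theorem isLittleO_digitSum_rpow_atTop (hb : 1 < b) {r : ℝ} (hr : 0 < r) :
    (fun n ↦ (digitSum b n : ℝ)) =o[atTop] fun n : ℕ ↦ (n : ℝ) ^ r :=
  (isBigO_digitSum_log_atTop hb).trans_isLittleO
    ((isLittleO_log_rpow_atTop hr).comp_tendsto tendsto_natCast_atTop_atTop)

end DigitSum

theorem differenced_digitSum_dirichlet_conv
    (b : ℕ) (hb : 2 ≤ b) (s : ℂ) (hs : 0 < s.re) :
    ∃ L : ℂ, Tendsto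
      (fun N : ℕ => ∑ n ∈ Finset.range N,
        (((digitSum b (n + 1) : ℤ) - (digitSum b n : ℤ) : ℤ) : ℂ) * ((n + 1 : ℕ) : ℂ) ^ (-s))
      atTop (nhds L) := by
  have digitSum_isBigO : (fun n ↦ (digitSum b n : ℂ)) =O[atTop] fun n ↦ (n : ℝ) ^ (s.re / 2) := by
    refine .of_norm_left ?_
    simpa only [Complex.norm_natCast] using (isLittleO_digitSum_rpow_atTop hb (half_pos hs)).isBigO
  simpa only [Int.cast_sub, Int.cast_natCast] using
    exists_tendsto_sum_range_sub_mul_cpow_neg_of_isBigO digitSum_isBigO (half_lt_self hs)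
end
end

section
/- Let b ≥ 2 be an integer. For every m ∈ ℤ, setting p = 2πim/log b, the function s ↦ (s - p) · ((b^s - b)/(b^s - 1)) · ζ(s) tends to -((b-1)/log b) · ζ(2πim/log b) as s → p with s ≠ p; in other words, Z_b(s) = ((b^s - b)/(b^s - 1)) ζ(s) has a simple pole at each point 2πim/log b with residue -((b-1)/log b) ζ(2πim/log b). -/
open Filter Topology

noncomputable section

/-! At a zero `p` of `b ^ s - 1` the derivative of `b ^ s` is `log b ≠ 0` and the numerator
`b ^ s - b` is `1 - b`, so the pole is simple; and `p ≠ 1` because `b ^ 1 = b ≠ 1`, so the pole of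
`ζ` does not interfere. -/

theorem tendsto_sub_mul_div_sub_nhdsNE {𝕜 : Type*} [NontriviallyNormedField 𝕜] {f g : 𝕜 → 𝕜}
    {g' a : 𝕜} (hf : ContinuousAt f a) (hg : HasDerivAt g g' a) (hg' : g' ≠ 0) :
    Tendsto (fun x ↦ (x - a) * (f x / (g x - g a))) (𝓝[≠] a) (𝓝 (f a / g')) := by
  have hslope : Tendsto (fun x ↦ f x / slope g a x) (𝓝[≠] a) (𝓝 (f a / g')) :=
    (hf.tendsto.mono_left nhdsWithin_le_nhds).div (hasDerivAt_iff_tendsto_slope.mp hg) hg'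
  refine hslope.congr fun x ↦ ?_
  rw [slope_def_field, div_div_eq_mul_div, mul_comm (f x), mul_div_assoc]

theorem complex_log_ne_zero {b : ℂ} (hb₀ : b ≠ 0) (hb₁ : b ≠ 1) : Complex.log b ≠ 0 :=
  fun hlog ↦ hb₁ (by rw [← Complex.exp_log hb₀, hlog, Complex.exp_zero])

theorem cpow_two_pi_I_mul_int_div_log {b : ℂ} (hb₀ : b ≠ 0) (hb₁ : b ≠ 1) (m : ℤ) :
    b ^ (2 * Real.pi * Complex.I * m / Complex.log b) = 1 := by
  rw [Complex.cpow_def_of_ne_zero hb₀, mul_div_cancel₀ _ (complex_log_ne_zero hb₀ hb₁),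
    Complex.exp_eq_one_iff]
  exact ⟨m, mul_comm _ _⟩

theorem Zb_simple_poles_general {b p : ℂ} (hb₀ : b ≠ 0) (hb₁ : b ≠ 1) (hp : b ^ p = 1) :
    Tendsto (fun s ↦ (s - p) * ((b ^ s - b) / (b ^ s - 1)) * riemannZeta s) (𝓝[≠] p)
      (𝓝 (-((b - 1) / Complex.log b) * riemannZeta p)) := by
  have hp₁ : p ≠ 1 := by
    rintro rfl
    exact hb₁ (by rwa [Complex.cpow_one] at hp)
  have hderiv : HasDerivAt (fun s ↦ b ^ s) (Complex.log b) p := by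
    simpa [hp] using (hasDerivAt_id p).const_cpow (Or.inl hb₀)
  have hnum : ContinuousAt (fun s ↦ (b ^ s - b) * riemannZeta s) p :=
    (hderiv.continuousAt.sub continuousAt_const).mul
      (differentiableAt_riemannZeta hp₁).continuousAt
  convert tendsto_sub_mul_div_sub_nhdsNE hnum hderiv (complex_log_ne_zero hb₀ hb₁) using 2
  · rw [hp]
    ring
  · rw [hp]
    ring

theorem Zb_simple_poles (b : ℕ) (hb : 2 ≤ b) (m : ℤ) :
    Filter.Tendsto
      (fun s : ℂ => (s - (2 * Real.pi * Complex.I * m / Real.log b)) *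
        ((Complex.exp (s * Real.log b) - b) / (Complex.exp (s * Real.log b) - 1))
        * riemannZeta s)
      (𝓝[≠] (2 * Real.pi * Complex.I * m / Real.log b))
      (𝓝 (-(((b : ℂ) - 1) / (Real.log b)) *
        riemannZeta (2 * Real.pi * Complex.I * m / Real.log b))) := by
  have hb₀ : (b : ℂ) ≠ 0 := Nat.cast_ne_zero.mpr (by omega)
  have hb₁ : (b : ℂ) ≠ 1 := Nat.cast_ne_one.mpr (by omega)
  simpa only [Complex.natCast_log, Complex.cpow_def_of_ne_zero hb₀, mul_comm (Complex.log b)]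
    using Zb_simple_poles_general hb₀ hb₁ (cpow_two_pi_I_mul_int_div_log hb₀ hb₁ m)
end
end

section
/- Let b ≥ 2 be an integer. The function s ↦ ((b^s - b)/(b^s - 1)) · ζ(s) - ((b-1)/(2 log b)) · s^{-1} tends to ((b-1)/(2 log b)) · log(2π) - (b+1)/4 as s → 0 with s ≠ 0; i.e. the Laurent expansion of ((b^s - b)/(b^s - 1)) ζ(s) at s = 0 begins ((b-1)/(2 log b)) s^{-1} + ( ((b-1)/(2 log b)) log(2π) - (b+1)/4 ) + O(s). -/
open Filter Topology

noncomputable section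

/-!
Since `(e^z - 1)⁻¹ = z⁻¹ - 1/2 + o(1)`, the factor `(e^z - c) / (e^z - 1) = 1 + (1 - c) / (e^z - 1)`
has principal part `(1 - c) / z` and constant term `(1 + c) / 2` at `z = 0`. Put `z = s log b`, and
multiply by `ζ(s) = -1/2 - (log 2π / 2) s + o(s)`.
-/

section NormedField

variable {𝕜 : Type*} [NontriviallyNormedField 𝕜] {f g : 𝕜 → 𝕜} {x a c : 𝕜}

theorem tendsto_mul_sub_div_sub_of_hasDerivAt {f' : 𝕜}
    (hg : Tendsto (fun z ↦ g z - a / (z - x)) (𝓝[≠] x) (𝓝 c)) (hf : HasDerivAt f f' x) :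
    Tendsto (fun z ↦ g z * f z - a * f x / (z - x)) (𝓝[≠] x) (𝓝 (c * f x + a * f')) := by
  have hfx : Tendsto f (𝓝[≠] x) (𝓝 (f x)) := hf.continuousAt.continuousWithinAt
  refine ((hg.mul hfx).add (hf.tendsto_slope.const_mul a)).congr fun z ↦ ?_
  rw [slope_def_field]
  ring

theorem tendsto_inv_sub_inv_mul_sub (ha : a ≠ 0)
    (hf : Tendsto (fun z ↦ (f z - a * (z - x)) / (z - x) ^ 2) (𝓝[≠] x) (𝓝 c)) :
    Tendsto (fun z ↦ (f z)⁻¹ - (a * (z - x))⁻¹) (𝓝[≠] x) (𝓝 (-c / a ^ 2)) := by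
  have hsub : Tendsto (fun z ↦ z - x) (𝓝[≠] x) (𝓝 0) :=
    tendsto_sub_nhds_zero_iff.mpr (tendsto_id.mono_left nhdsWithin_le_nhds)
  have hslope : Tendsto (fun z ↦ f z / (z - x)) (𝓝[≠] x) (𝓝 a) := by
    have hsum := (hsub.mul hf).add_const a
    rw [zero_mul, zero_add] at hsum
    refine hsum.congr' ?_
    filter_upwards [self_mem_nhdsWithin] with z hz
    have hzx : z - x ≠ 0 := sub_ne_zero.mpr hz
    field_simp
    ring
  have hquot := hf.neg.div (hslope.const_mul a) (mul_ne_zero ha ha)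
  rw [← sq] at hquot
  refine hquot.congr' ?_
  filter_upwards [self_mem_nhdsWithin, hslope.eventually_ne ha] with z hz hfz
  have hzx : z - x ≠ 0 := sub_ne_zero.mpr hz
  have hfz : f z ≠ 0 := (div_ne_zero_iff.mp hfz).1
  simp only [Pi.div_apply]
  field_simp
  ring

end NormedField

theorem tendsto_cexp_sub_one_sub_div_sq :
    Tendsto (fun z : ℂ ↦ (Complex.exp z - 1 - z) / z ^ 2) (𝓝[≠] 0) (𝓝 (1 / 2)) := by
  have hrem := ((Complex.exp_sub_sum_range_succ_isLittleO_pow 2).mono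
    (nhdsWithin_le_nhds (s := {0}ᶜ))).tendsto_div_nhds_zero.add_const (1 / 2 : ℂ)
  rw [zero_add] at hrem
  refine hrem.congr' ?_
  filter_upwards [self_mem_nhdsWithin] with z (hz : z ≠ 0)
  simp only [Finset.sum_range_succ, Finset.sum_range_zero, Nat.factorial]
  push_cast
  field_simp
  ring

theorem tendsto_inv_cexp_sub_one_sub_inv :
    Tendsto (fun z : ℂ ↦ (Complex.exp z - 1)⁻¹ - z⁻¹) (𝓝[≠] 0) (𝓝 (-1 / 2)) := by
  have h := tendsto_inv_sub_inv_mul_sub (f := fun z ↦ Complex.exp z - 1) (x := 0)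
    one_ne_zero (by simpa only [sub_zero, one_mul] using tendsto_cexp_sub_one_sub_div_sq)
  simpa only [sub_zero, one_mul, one_pow, div_one, neg_div] using h

theorem tendsto_cexp_sub_div_cexp_sub_one_sub_div (c : ℂ) :
    Tendsto (fun z : ℂ ↦ (Complex.exp z - c) / (Complex.exp z - 1) - (1 - c) / z) (𝓝[≠] 0)
      (𝓝 ((1 + c) / 2)) := by
  have h := (tendsto_inv_cexp_sub_one_sub_inv.const_mul (1 - c)).const_add 1
  rw [show 1 + (1 - c) * (-1 / 2) = (1 + c) / 2 by ring] at h
  refine h.congr' ?_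
  filter_upwards [(Complex.hasDerivAt_exp 0).eventually_ne (Complex.exp_ne_zero 0) (c := 1)]
    with z hz
  have hz : Complex.exp z - 1 ≠ 0 := sub_ne_zero.mpr hz
  rw [show Complex.exp z - c = (Complex.exp z - 1) + (1 - c) by ring, add_div, div_self hz]
  ring

theorem hasDerivAt_riemannZeta_zero :
    HasDerivAt riemannZeta (-(Real.log (2 * Real.pi) : ℂ) / 2) 0 := by
  have h := (differentiableAt_riemannZeta zero_ne_one).hasDerivAt
  rw [deriv_riemannZeta_zero] at h
  rw [Complex.ofReal_log (by positivity)]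
  exact_mod_cast h

theorem Zb_laurent_at_zero_general (c : ℂ) {L : ℂ} (hL : L ≠ 0) :
    Tendsto
      (fun s : ℂ ↦ (Complex.exp (s * L) - c) / (Complex.exp (s * L) - 1) * riemannZeta s
        - ((c - 1) / (2 * L)) * s⁻¹)
      (𝓝[≠] 0) (𝓝 (((c - 1) / (2 * L)) * Real.log (2 * Real.pi) - (c + 1) / 4)) := by
  have hscale : Tendsto (fun s : ℂ ↦ s * L) (𝓝[≠] 0) (𝓝[≠] 0) := by
    simpa only [zero_mul, id] using
      ((hasDerivAt_id (0 : ℂ)).mul_const L).tendsto_nhdsNE (by simpa using hL)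
  have hfactor : Tendsto (fun s : ℂ ↦ (Complex.exp (s * L) - c) / (Complex.exp (s * L) - 1)
      - (1 - c) / L / (s - 0)) (𝓝[≠] 0) (𝓝 ((1 + c) / 2)) := by
    refine ((tendsto_cexp_sub_div_cexp_sub_one_sub_div c).comp hscale).congr fun s ↦ ?_
    rw [Function.comp_apply, sub_zero, div_div, mul_comm L s]
  have hprod := tendsto_mul_sub_div_sub_of_hasDerivAt hfactor hasDerivAt_riemannZeta_zero
  rw [riemannZeta_zero] at hprod
  convert hprod using 2
  · rw [sub_zero]
    ring
  · ring

theorem Zb_laurent_at_zero (b : ℕ) (hb : 2 ≤ b) :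
    Filter.Tendsto
      (fun s : ℂ =>
        (Complex.exp (s * Real.log b) - b) / (Complex.exp (s * Real.log b) - 1)
          * riemannZeta s
        - (((b : ℂ) - 1) / (2 * Real.log b)) * s⁻¹)
      (𝓝[≠] (0 : ℂ))
      (𝓝 ((((b : ℂ) - 1) / (2 * Real.log b)) * Real.log (2 * Real.pi)
        - ((b : ℂ) + 1) / 4)) := by
  have hlog : Real.log b ≠ 0 := (Real.log_pos (by exact_mod_cast hb)).ne'
  exact Zb_laurent_at_zero_general b (Complex.ofReal_ne_zero.mpr hlog)
end
end

section
/- For every real β > 1 and every ε > 0 there exists a constant C > 0 such that |c_β(k)| ≤ C · |k|^{-3/2 + ε} for all nonzero k ∈ ℤ. -/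
noncomputable section

/-- The Fourier coefficients `c_β(k)` from Delange's theorem. -/
def delangeCoeff (β : ℝ) (k : ℤ) : ℂ :=
  if k = 0 then
    ((((β : ℂ) - 1) / (2 * Real.log β)) * (Real.log (2 * Real.pi) - 1) - ((β : ℂ) + 1) / 4)
  else
    -(((β : ℂ) - 1) / (2 * Real.pi * Complex.I * k)) *
      (1 + 2 * Real.pi * Complex.I * k / Real.log β)⁻¹ *
      riemannZeta (2 * Real.pi * Complex.I * k / Real.log β)

/-!
The functional equation expresses `ζ(it)` through `ζ(1 - it)`, and Euler's reflection formula gives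
`|Γ(1 - it)|² = πt / sinh πt` exactly, so that
`|ζ(it)|² = t tanh(πt/2) / (2π) · |ζ(1 + it)|²` and no form of Stirling's formula is needed.

Euler summation truncated at `N` gives `|ζ(s)| ≤ 1 + log N + 1/|s - 1| + |s|/N` for `Re s > 1`.
The right-hand side does not degenerate as `Re s → 1`, so the bound persists on the line `Re s = 1`
by continuity; taking `N = ⌊|t|⌋` yields `ζ(1 + it) = O(log |t|)`, hence `ζ(it) = O(|t|^(1/2 + ε))`.
The other two factors of `c_β(k)` each contribute `O(1/|k|)`.
-/

open Filter Asymptotics MeasureTheory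
open Complex (I)

section EulerSummation

theorem sum_Icc_one_eq_mul_sub_integral {𝕜 : Type*} [RCLike 𝕜] {f : ℝ → 𝕜} {N : ℕ}
    (hdiff : ∀ t ∈ Set.Icc (1 : ℝ) N, DifferentiableAt ℝ f t)
    (hint : IntegrableOn (deriv f) (Set.Icc 1 N)) :
    ∑ n ∈ Finset.Icc 1 N, f n = N * f N - ∫ t in Set.Ioc (1 : ℝ) N, deriv f t * ⌊t⌋₊ := by
  let c : ℕ → 𝕜 := fun k ↦ if k = 0 then 0 else 1
  have hsum (g : ℕ → 𝕜) (m : ℕ) :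
      ∑ k ∈ Finset.Icc 0 m, g k * c k = ∑ k ∈ Finset.Icc 1 m, g k := by
    rw [← Finset.add_sum_Ioc_eq_sum_Icc m.zero_le, ← Finset.Icc_add_one_left_eq_Ioc]
    simp only [c, if_pos, mul_zero, zero_add]
    refine Finset.sum_congr rfl fun k hk ↦ ?_
    rw [if_neg (Nat.one_le_iff_ne_zero.1 (Finset.mem_Icc.1 hk).1), mul_one]
  have hcount (m : ℕ) : ∑ k ∈ Finset.Icc 0 m, c k = m := by
    simpa using hsum 1 m
  have habel := sum_mul_eq_sub_integral_mul₀' c (if_pos rfl) N hdiff hint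
  simp only [hcount] at habel
  rw [← hsum, habel, mul_comm]

variable {s : ℂ}

theorem norm_fract_mul_cpow_le {t : ℝ} (ht : 0 < t) :
    ‖((Int.fract t : ℝ) : ℂ) * (t : ℂ) ^ (-(s + 1))‖ ≤ t ^ (-s.re - 1) := by
  rw [norm_mul, Complex.norm_real, Real.norm_of_nonneg (Int.fract_nonneg t),
    Complex.norm_cpow_eq_rpow_re_of_pos ht,
    Complex.neg_re, Complex.add_re, Complex.one_re, neg_add']
  exact mul_le_of_le_one_left (by positivity) (Int.fract_lt_one t).le

theorem integrableOn_Ioi_fract_mul_cpow (hs : 0 < s.re) {a : ℝ} (ha : 0 < a) :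
    IntegrableOn (fun t : ℝ ↦ ((Int.fract t : ℝ) : ℂ) * (t : ℂ) ^ (-(s + 1))) (Set.Ioi a) := by
  refine (integrableOn_Ioi_rpow_of_lt (by linarith : -s.re - 1 < -1) ha).mono'
    (by fun_prop) ((ae_restrict_mem measurableSet_Ioi).mono fun t ht ↦ ?_)
  exact norm_fract_mul_cpow_le (ha.trans ht)

theorem norm_integral_Ioi_fract_mul_cpow_le (hs : 0 < s.re) {a : ℝ} (ha : 0 < a) :
    ‖∫ t in Set.Ioi a, ((Int.fract t : ℝ) : ℂ) * (t : ℂ) ^ (-(s + 1))‖ ≤ a ^ (-s.re) / s.re := by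
  have h : -s.re - 1 < -1 := by linarith
  calc ‖∫ t in Set.Ioi a, ((Int.fract t : ℝ) : ℂ) * (t : ℂ) ^ (-(s + 1))‖
      ≤ ∫ t in Set.Ioi a, t ^ (-s.re - 1) :=
        norm_integral_le_of_norm_le (integrableOn_Ioi_rpow_of_lt h ha)
          ((ae_restrict_mem measurableSet_Ioi).mono fun t ht ↦ norm_fract_mul_cpow_le (ha.trans ht))
    _ = a ^ (-s.re) / s.re := by
        rw [integral_Ioi_rpow_of_lt h ha, sub_add_cancel, neg_div_neg_eq]

theorem natFloor_mul_cpow_eq_sub {t : ℝ} (ht : 0 < t) :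
    (⌊t⌋₊ : ℂ) * (t : ℂ) ^ (-(s + 1)) =
      (t : ℂ) ^ (-s) - ((Int.fract t : ℝ) : ℂ) * (t : ℂ) ^ (-(s + 1)) := by
  have hfloor : (⌊t⌋₊ : ℂ) = t - Int.fract t := by
    rw [← Complex.ofReal_natCast, natCast_floor_eq_intCast_floor ht.le, ← Complex.ofReal_sub,
      Int.self_sub_fract]
  have hpow : (t : ℂ) ^ (-s) = t * (t : ℂ) ^ (-(s + 1)) := by
    rw [← add_sub_cancel 1 (-s), Complex.cpow_add _ _ (Complex.ofReal_ne_zero.2 ht.ne'),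
      Complex.cpow_one, neg_add']
  rw [hfloor, hpow, sub_mul]

theorem riemannZeta_eq_mul_integral_natFloor (hs : 1 < s.re) :
    riemannZeta s = s * ∫ t in Set.Ioi (1 : ℝ), (⌊t⌋₊ : ℂ) * (t : ℂ) ^ (-(s + 1)) := by
  have hcount : (fun n : ℕ ↦ ∑ k ∈ Finset.Icc 1 n, ‖(1 : ℕ → ℂ) k‖) =O[atTop]
      fun n ↦ (n : ℝ) ^ (1 : ℝ) := by
    simpa using isBigO_refl _ _
  simpa [LSeries_one_eq_riemannZeta hs] using LSeries_eq_mul_integral' 1 zero_le_one hs hcount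

theorem hasDerivAt_ofReal_cpow_neg (hs : s ≠ 0) {t : ℝ} (ht : t ≠ 0) :
    HasDerivAt (fun x : ℝ ↦ (x : ℂ) ^ (-s)) (-s * (t : ℂ) ^ (-(s + 1))) t := by
  rw [neg_add']
  exact hasDerivAt_ofReal_cpow_const ht (neg_ne_zero.2 hs)

theorem sum_Icc_natCast_cpow_neg (hs : s ≠ 0) {N : ℕ} (hN : N ≠ 0) :
    ∑ n ∈ Finset.Icc 1 N, (n : ℂ) ^ (-s) =
      (N : ℂ) ^ (1 - s) + s * ∫ t in (1 : ℝ)..N, (⌊t⌋₊ : ℂ) * (t : ℂ) ^ (-(s + 1)) := by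
  have hN₁ : (1 : ℝ) ≤ N := mod_cast Nat.one_le_iff_ne_zero.2 hN
  have hderiv {t : ℝ} (ht : t ∈ Set.Icc (1 : ℝ) N) :
      HasDerivAt (fun x : ℝ ↦ (x : ℂ) ^ (-s)) (-s * (t : ℂ) ^ (-(s + 1))) t :=
    hasDerivAt_ofReal_cpow_neg hs (zero_lt_one.trans_le ht.1).ne'
  have hint : IntegrableOn (deriv fun x : ℝ ↦ (x : ℂ) ^ (-s)) (Set.Icc 1 N) := by
    have hcont : ContinuousOn (fun t : ℝ ↦ -s * (t : ℂ) ^ (-(s + 1))) (Set.Icc 1 N) :=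
      fun t ht ↦ ((Complex.continuousAt_ofReal_cpow_const t _ <|
        .inr (zero_lt_one.trans_le ht.1).ne').const_mul _).continuousWithinAt
    exact hcont.integrableOn_Icc.congr_fun (fun t ht ↦ (hderiv ht).deriv.symm) measurableSet_Icc
  have habel := sum_Icc_one_eq_mul_sub_integral (fun t ht ↦ (hderiv ht).differentiableAt) hint
  simp only [Complex.ofReal_natCast] at habel
  rw [habel, intervalIntegral.integral_of_le hN₁, ← integral_const_mul, sub_eq_add_neg,
    ← integral_neg]
  congr 1
  · rw [sub_eq_add_neg, Complex.cpow_add _ _ (Nat.cast_ne_zero.2 hN), Complex.cpow_one]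
  · refine setIntegral_congr_fun measurableSet_Ioc fun t ht ↦ ?_
    simp only [(hderiv (Set.Ioc_subset_Icc_self ht)).deriv]
    ring

theorem riemannZeta_eq_sum_add_sub_integral_fract (hs : 1 < s.re) {N : ℕ} (hN : N ≠ 0) :
    riemannZeta s = ∑ n ∈ Finset.Icc 1 N, (n : ℂ) ^ (-s) + (N : ℂ) ^ (1 - s) / (s - 1) -
      s * ∫ t in Set.Ioi (N : ℝ), ((Int.fract t : ℝ) : ℂ) * (t : ℂ) ^ (-(s + 1)) := by
  have hN₀ : (0 : ℝ) < N := by positivity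
  have hs₁ : s - 1 ≠ 0 := sub_ne_zero.2 fun h ↦ by simp [h] at hs
  have hre : (-s).re < -1 := by simpa using hs
  have hfract {a : ℝ} (ha : 0 < a) := integrableOn_Ioi_fract_mul_cpow (zero_lt_one.trans hs) ha
  have hfloor {a : ℝ} (ha : 0 < a) : Set.EqOn (fun t : ℝ ↦ (⌊t⌋₊ : ℂ) * (t : ℂ) ^ (-(s + 1)))
      (fun t ↦ (t : ℂ) ^ (-s) - ((Int.fract t : ℝ) : ℂ) * (t : ℂ) ^ (-(s + 1))) (Set.Ioi a) :=
    fun t ht ↦ natFloor_mul_cpow_eq_sub (ha.trans ht)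
  have hint {a : ℝ} (ha : 0 < a) :
      IntegrableOn (fun t : ℝ ↦ (⌊t⌋₊ : ℂ) * (t : ℂ) ^ (-(s + 1))) (Set.Ioi a) :=
    ((integrableOn_Ioi_cpow_of_lt hre ha).sub (hfract ha)).congr_fun (hfloor ha).symm
      measurableSet_Ioi
  have htail : ∫ t in Set.Ioi (N : ℝ), (⌊t⌋₊ : ℂ) * (t : ℂ) ^ (-(s + 1)) =
      (N : ℂ) ^ (1 - s) / (s - 1) -
        ∫ t in Set.Ioi (N : ℝ), ((Int.fract t : ℝ) : ℂ) * (t : ℂ) ^ (-(s + 1)) := by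
    rw [setIntegral_congr_fun measurableSet_Ioi (hfloor hN₀),
      integral_sub (integrableOn_Ioi_cpow_of_lt hre hN₀) (hfract hN₀),
      integral_Ioi_cpow_of_lt hre hN₀, neg_add_eq_sub, ← neg_sub s 1, neg_div_neg_eq,
      neg_sub, Complex.ofReal_natCast]
  rw [riemannZeta_eq_mul_integral_natFloor hs,
    sum_Icc_natCast_cpow_neg (Complex.ne_zero_of_one_lt_re hs) hN,
    ← intervalIntegral.integral_interval_add_Ioi (hint one_pos) (hint hN₀), htail]
  field_simp
  ring

theorem norm_sum_Icc_natCast_cpow_neg_le (hs : 1 ≤ s.re) (N : ℕ) :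
    ‖∑ n ∈ Finset.Icc 1 N, (n : ℂ) ^ (-s)‖ ≤ 1 + Real.log N := by
  refine le_trans (norm_sum_le_of_le _ fun n hn ↦ ?_)
    (by simpa [harmonic_eq_sum_Icc] using harmonic_le_one_add_log N)
  have hn₁ : 1 ≤ n := (Finset.mem_Icc.1 hn).1
  rw [Complex.norm_natCast_cpow_of_pos hn₁, ← Real.rpow_neg_one]
  exact Real.rpow_le_rpow_of_exponent_le (mod_cast hn₁) (by simpa using hs)

theorem norm_riemannZeta_le_of_one_lt_re (hs : 1 < s.re) {N : ℕ} (hN : N ≠ 0) :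
    ‖riemannZeta s‖ ≤ 1 + Real.log N + ‖s - 1‖⁻¹ + ‖s‖ / N := by
  have hN₁ : (1 : ℝ) ≤ N := mod_cast Nat.one_le_iff_ne_zero.2 hN
  have hpole : ‖(N : ℂ) ^ (1 - s) / (s - 1)‖ ≤ ‖s - 1‖⁻¹ := by
    rw [norm_div, Complex.norm_natCast_cpow_of_pos (Nat.pos_of_ne_zero hN), ← one_div]
    gcongr
    exact Real.rpow_le_one_of_one_le_of_nonpos hN₁ (by simpa using hs.le)
  have hfract : ‖∫ t in Set.Ioi (N : ℝ), ((Int.fract t : ℝ) : ℂ) * (t : ℂ) ^ (-(s + 1))‖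
      ≤ (N : ℝ)⁻¹ :=
    calc _ ≤ (N : ℝ) ^ (-s.re) / s.re :=
          norm_integral_Ioi_fract_mul_cpow_le (zero_lt_one.trans hs) (by positivity)
      _ ≤ (N : ℝ) ^ (-s.re) := div_le_self (by positivity) hs.le
      _ ≤ (N : ℝ)⁻¹ := by
        rw [← Real.rpow_neg_one]
        exact Real.rpow_le_rpow_of_exponent_le hN₁ (by linarith)
  rw [riemannZeta_eq_sum_add_sub_integral_fract hs hN, div_eq_mul_inv ‖s‖]
  refine norm_sub_le_of_le (norm_add_le_of_le (norm_sum_Icc_natCast_cpow_neg_le hs.le N) hpole) ?_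
  rw [norm_mul]
  gcongr

theorem norm_riemannZeta_le_of_one_le_re (hs : 1 ≤ s.re) (hs₁ : s ≠ 1) {N : ℕ} (hN : N ≠ 0) :
    ‖riemannZeta s‖ ≤ 1 + Real.log N + ‖s - 1‖⁻¹ + ‖s‖ / N := by
  have hclosure : s ∈ closure {z : ℂ | 1 < z.re} := by
    rwa [Complex.closure_setOfPred_lt_re]
  refine ContinuousWithinAt.closure_le hclosure
    (differentiableAt_riemannZeta hs₁).continuousAt.norm.continuousWithinAt
    (ContinuousAt.continuousWithinAt ?_) fun z hz ↦ norm_riemannZeta_le_of_one_lt_re hz hN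
  have : ‖s - 1‖ ≠ 0 := by simpa [sub_eq_zero] using hs₁
  fun_prop (disch := assumption)

end EulerSummation

theorem norm_Gamma_one_add_mul_I_sq {t : ℝ} (ht : t ≠ 0) :
    ‖Complex.Gamma (1 + t * I)‖ ^ 2 = Real.pi * t / Real.sinh (Real.pi * t) := by
  have hconj : Complex.Gamma (1 - t * I) = starRingEnd ℂ (Complex.Gamma (1 + t * I)) := by
    rw [← Complex.Gamma_conj]
    simp [sub_eq_add_neg]
  have hsin : Complex.sin (Real.pi * (t * I)) = Real.sinh (Real.pi * t) * I := by
    rw [← mul_assoc, Complex.sin_mul_I]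
    simp
  have hreflection :
      Complex.Gamma (1 + t * I) * Complex.Gamma (1 - t * I) =
        (Real.pi * t / Real.sinh (Real.pi * t) : ℝ) := by
    rw [add_comm, Complex.Gamma_add_one _ (by simp [ht]), mul_assoc,
      Complex.Gamma_mul_Gamma_one_sub, hsin]
    push_cast
    field_simp [Complex.I_ne_zero]
  rw [hconj, Complex.mul_conj'] at hreflection
  exact_mod_cast hreflection

theorem norm_riemannZeta_mul_I_sq {t : ℝ} (ht : t ≠ 0) :
    ‖riemannZeta (t * I)‖ ^ 2 =
      t * Real.tanh (Real.pi * t / 2) / (2 * Real.pi) * ‖riemannZeta (1 + t * I)‖ ^ 2 := by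
  have hzeta : ‖riemannZeta (1 - t * I)‖ = ‖riemannZeta (1 + t * I)‖ := by
    rw [← RCLike.norm_conj, ← riemannZeta_conj]
    simp
  have hgamma : ‖Complex.Gamma (1 - t * I)‖ ^ 2 = Real.pi * t / Real.sinh (Real.pi * t) := by
    simpa [← sub_eq_add_neg] using norm_Gamma_one_add_mul_I_sq (neg_ne_zero.2 ht)
  have hcos : ‖Complex.cos (Real.pi * (1 - t * I) / 2)‖ ^ 2 = Real.sinh (Real.pi * t / 2) ^ 2 := by
    have : Complex.cos (Real.pi * (1 - t * I) / 2) = (Real.sinh (Real.pi * t / 2) : ℂ) * I := by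
      rw [Complex.ofReal_sinh, ← Complex.sin_mul_I, ← Complex.cos_pi_div_two_sub]
      push_cast
      ring_nf
    rw [this, norm_mul, Complex.norm_real, Complex.norm_I, mul_one, Real.norm_eq_abs, sq_abs]
  have hpow : ‖(2 * Real.pi : ℂ) ^ (-(1 - t * I))‖ = (2 * Real.pi)⁻¹ := by
    have := Complex.norm_cpow_eq_rpow_re_of_pos Real.two_pi_pos (-(1 - t * I))
    simpa [Real.rpow_neg_one] using this
  have hfe := riemannZeta_one_sub (s := 1 - t * I)
    (fun n h ↦ ht (by simpa using congrArg Complex.im h)) (by simp [ht])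
  rw [sub_sub_cancel] at hfe
  have hsinh : Real.sinh (Real.pi * t / 2) ≠ 0 := by simp [ht, Real.pi_ne_zero]
  have hcosh := (Real.cosh_pos (Real.pi * t / 2)).ne'
  have hdouble : Real.sinh (Real.pi * t) =
      2 * Real.sinh (Real.pi * t / 2) * Real.cosh (Real.pi * t / 2) := by
    rw [← Real.sinh_two_mul]; ring_nf
  simp only [hfe, norm_mul, mul_pow, hzeta, hpow, hgamma, hcos, hdouble,
    Real.tanh_eq_sinh_div_cosh, Complex.norm_ofNat]
  field_simp [Real.pi_ne_zero]

theorem riemannZeta_one_add_mul_I_isBigO_log :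
    (fun t : ℝ ↦ riemannZeta (1 + t * I)) =O[cocompact ℝ] Real.log := by
  refine .of_bound 6 ?_
  filter_upwards [tendsto_norm_cocompact_atTop.eventually_ge_atTop (Real.exp 1)] with t ht
  rw [Real.norm_eq_abs] at ht
  have hlog : 1 ≤ Real.log |t| := (Real.le_log_iff_exp_le ((Real.exp_pos 1).trans_le ht)).2 ht
  have ht₁ : 1 ≤ |t| := by linarith [Real.add_one_le_exp (1 : ℝ)]
  have ht₀ : t ≠ 0 := abs_pos.1 (by linarith)
  have hN₁ : 1 ≤ ⌊|t|⌋₊ := Nat.le_floor (mod_cast ht₁)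
  have hN : 1 ≤ (⌊|t|⌋₊ : ℝ) := mod_cast hN₁
  have hzeta := norm_riemannZeta_le_of_one_le_re (s := 1 + t * I) (by simp) (by simp [ht₀])
    (Nat.one_le_iff_ne_zero.1 hN₁)
  have hlogN : Real.log ⌊|t|⌋₊ ≤ Real.log |t| :=
    Real.log_le_log (by linarith) (Nat.floor_le (abs_nonneg t))
  have hpole : ‖(1 + t * I : ℂ) - 1‖⁻¹ ≤ 1 := by
    simpa using inv_le_one_of_one_le₀ ht₁
  have herror : ‖(1 + t * I : ℂ)‖ / ⌊|t|⌋₊ ≤ 3 := by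
    have hnorm : ‖(1 + t * I : ℂ)‖ ≤ 1 + |t| := by simpa using norm_add_le (1 : ℂ) (t * I)
    rw [div_le_iff₀ (by linarith)]
    linarith [Nat.lt_floor_add_one |t|]
  rw [← Real.log_abs, Real.norm_of_nonneg (by linarith : 0 ≤ Real.log |t|)]
  linarith

theorem norm_riemannZeta_mul_I_le {t : ℝ} (ht : t ≠ 0) :
    ‖riemannZeta (t * I)‖ ≤ √|t| * ‖riemannZeta (1 + t * I)‖ := by
  refine abs_le_of_sq_le_sq' ?_ (by positivity) |>.2
  rw [norm_riemannZeta_mul_I_sq ht, mul_pow, Real.sq_sqrt (abs_nonneg t)]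
  gcongr
  calc t * Real.tanh (Real.pi * t / 2) / (2 * Real.pi)
    _ ≤ |t * Real.tanh (Real.pi * t / 2)| / (2 * Real.pi) := by
      gcongr
      exact le_abs_self _
    _ ≤ |t| / (2 * Real.pi) := by
      rw [abs_mul]
      gcongr
      exact mul_le_of_le_one_right (abs_nonneg t) (Real.abs_tanh_lt_one _).le
    _ ≤ |t| := div_le_self (abs_nonneg t) (by linarith [Real.pi_gt_three])

theorem riemannZeta_mul_I_isBigO_rpow {ε : ℝ} (hε : 0 < ε) :
    (fun t : ℝ ↦ riemannZeta (t * I)) =O[cocompact ℝ] fun t ↦ |t| ^ (1 / 2 + ε) := by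
  have hne : ∀ᶠ t : ℝ in cocompact ℝ, t ≠ 0 :=
    (eventually_cofinite_ne 0).filter_mono cocompact_le_cofinite
  have hlog : Real.log =O[cocompact ℝ] fun t ↦ |t| ^ ε := by
    simpa [Function.comp_def] using
      (isLittleO_log_rpow_atTop hε).isBigO.comp_tendsto (tendsto_norm_cocompact_atTop (E := ℝ))
  have hsqrt : (fun t : ℝ ↦ riemannZeta (t * I)) =O[cocompact ℝ]
      fun t ↦ √|t| * ‖riemannZeta (1 + t * I)‖ :=
    .of_norm_eventuallyLE (hne.mono fun t ht ↦ by simpa using norm_riemannZeta_mul_I_le ht)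
  refine (hsqrt.trans ((isBigO_refl _ _).mul
    (riemannZeta_one_add_mul_I_isBigO_log.norm_left.trans hlog))).congr' .rfl ?_
  filter_upwards [hne] with t ht
  rw [Real.sqrt_eq_rpow, Real.rpow_add (abs_pos.2 ht)]

theorem delangeCoeff_eq_of_ne_zero (β : ℝ) {k : ℤ} (hk : k ≠ 0) :
    delangeCoeff β k = -((β - 1) / (2 * Real.pi * I * k)) *
      (1 + (2 * Real.pi / Real.log β * k : ℝ) * I)⁻¹ *
        riemannZeta ((2 * Real.pi / Real.log β * k : ℝ) * I) := by
  have h : 2 * Real.pi * I * k / Real.log β = (2 * Real.pi / Real.log β * k : ℝ) * I := by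
    push_cast
    ring
  rw [delangeCoeff, if_neg hk, h]

theorem inv_one_add_mul_I_isBigO_inv :
    (fun t : ℝ ↦ (1 + t * I)⁻¹) =O[cocompact ℝ] fun t ↦ |t|⁻¹ := by
  refine .of_bound' ?_
  filter_upwards [(eventually_cofinite_ne 0).filter_mono cocompact_le_cofinite] with t ht
  have him : |t| ≤ ‖1 + t * I‖ := by simpa using Complex.abs_im_le_norm (1 + t * I)
  rw [norm_inv, norm_inv, Real.norm_eq_abs, abs_abs]
  gcongr

theorem delangeCoeff_isBigO_rpow {β : ℝ} (hβ₀ : 0 < β) (hβ₁ : β ≠ 1) {ε : ℝ} (hε : 0 < ε) :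
    delangeCoeff β =O[cofinite] fun k : ℤ ↦ |(k : ℝ)| ^ (-(3 : ℝ) / 2 + ε) := by
  set a : ℝ := 2 * Real.pi / Real.log β
  have ha : a ≠ 0 :=
    div_ne_zero Real.two_pi_pos.ne' (Real.log_ne_zero_of_pos_of_ne_one hβ₀ hβ₁)
  have hne : ∀ᶠ k : ℤ in cofinite, k ≠ 0 := eventually_cofinite_ne 0
  have hfreq : Tendsto (fun k : ℤ ↦ a * k) cofinite (cocompact ℝ) :=
    (tendsto_cocompact_mul_left₀ ha).comp Int.tendsto_coe_cofinite
  have hscale (r : ℝ) : (fun k : ℤ ↦ |a * k| ^ r) =O[cofinite] fun k : ℤ ↦ |(k : ℝ)| ^ r := by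
    simp_rw [abs_mul, Real.mul_rpow (abs_nonneg _) (abs_nonneg _)]
    exact isBigO_const_mul_self _ _ _
  have hfactor : (fun k : ℤ ↦ -((β - 1 : ℂ) / (2 * Real.pi * I * k))) =O[cofinite]
      fun k ↦ |(k : ℝ)| ^ (-1 : ℝ) := by
    refine .of_bound (‖(β - 1 : ℂ)‖ / (2 * Real.pi)) (.of_forall fun k ↦ le_of_eq ?_)
    simp only [norm_neg, norm_div, norm_mul, Complex.norm_ofNat, Complex.norm_real,
      Real.norm_eq_abs, abs_of_pos Real.pi_pos, Complex.norm_I, mul_one, Complex.norm_intCast,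
      Real.rpow_neg_one, norm_inv, abs_abs]
    ring
  have hinv : (fun k : ℤ ↦ (1 + (a * k : ℝ) * I)⁻¹) =O[cofinite]
      fun k ↦ |(k : ℝ)| ^ (-1 : ℝ) := by
    refine (inv_one_add_mul_I_isBigO_inv.comp_tendsto hfreq).trans ?_
    simpa [Function.comp_def, Real.rpow_neg_one] using hscale (-1)
  have hzeta : (fun k : ℤ ↦ riemannZeta ((a * k : ℝ) * I)) =O[cofinite]
      fun k ↦ |(k : ℝ)| ^ (1 / 2 + ε) :=
    ((riemannZeta_mul_I_isBigO_rpow hε).comp_tendsto hfreq).trans (hscale _)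
  refine ((hfactor.mul hinv).mul hzeta).congr' ?_ ?_
  · filter_upwards [hne] with k hk
    exact (delangeCoeff_eq_of_ne_zero β hk).symm
  · filter_upwards [hne] with k hk
    have hk' : 0 < |(k : ℝ)| := by positivity
    rw [← Real.rpow_add hk', ← Real.rpow_add hk']
    ring_nf

theorem delangeCoeff_bound_general {β : ℝ} (hβ₀ : 0 < β) (hβ₁ : β ≠ 1) {ε : ℝ} (hε : 0 < ε) :
    ∃ C : ℝ, 0 < C ∧ ∀ k : ℤ, k ≠ 0 →
      ‖delangeCoeff β k‖ ≤ C * (|k| : ℝ) ^ (-(3 : ℝ) / 2 + ε) := by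
  obtain ⟨C, hC, hbound⟩ := bound_of_isBigO_cofinite (delangeCoeff_isBigO_rpow hβ₀ hβ₁ hε)
  refine ⟨C, hC, fun k hk ↦ ?_⟩
  have hpos : 0 < |(k : ℝ)| ^ (-(3 : ℝ) / 2 + ε) := by positivity
  simpa only [Real.norm_of_nonneg hpos.le] using hbound hpos.ne'

theorem delangeCoeff_bound (β : ℝ) (hβ : 1 < β) (ε : ℝ) (hε : 0 < ε) :
    ∃ C : ℝ, 0 < C ∧ ∀ k : ℤ, k ≠ 0 →
      ‖delangeCoeff β k‖ ≤ C * (|k| : ℝ) ^ (-(3 : ℝ) / 2 + ε) :=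
  delangeCoeff_bound_general (by linarith) hβ.ne' hε
end
end

section
/- For every complex number x with 0 < |x| < 2π, the series ∑_{k=2}^∞ (B_k/(k·(k-2)!)) x^k converges absolutely and x² e^x / (e^x - 1)² = 1 - ∑_{k=2}^∞ (B_k/(k·(k-2)!)) x^k. -/
noncomputable section

/-!
Formally, `B = ∑ (Bₙ / n!) Xⁿ` satisfies `B (e^X - 1) = X`. Differentiating this relation gives
`(B - X B') (e^X - 1)² = X² e^X`, and the `n`-th coefficient of `B - X B'` is `(1 - n) Bₙ / n!`:
it vanishes at `n = 1`, and for `n ≥ 2` it equals `-Bₙ / (n (n - 2)!)`. Since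
`|B₂ₘ| (2π)²ᵐ / (2m)! = 2 ζ(2m)` is bounded, `B - X B'` converges absolutely on the disc of radius
`2π`, where `eˣ - 1` vanishes only at `0`, so the formal identity may be evaluated and divided by
`(eˣ - 1)²`.
-/

section PowerSeriesEvaluation

open PowerSeries Asymptotics Filter Finset

/-- The power series `p` converges absolutely at the point `x` of a normed ring, with sum `a`.
Absolute convergence is included so that such sums can be multiplied. -/
def HasAbsSumAt {R : Type*} [NormedRing R] (p : R⟦X⟧) (x a : R) : Prop :=
  Summable (fun n => ‖coeff n p * x ^ n‖) ∧ HasSum (fun n => coeff n p * x ^ n) a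

namespace HasAbsSumAt

section NormedRing

variable {R : Type*} [NormedRing R] {p q : R⟦X⟧} {x a b : R}

lemma unique (ha : HasAbsSumAt p x a) (hb : HasAbsSumAt p x b) : a = b :=
  ha.2.unique hb.2

lemma of_summable_norm [CompleteSpace R] (hp : Summable fun n => ‖coeff n p * x ^ n‖) :
    HasAbsSumAt p x (∑' n, coeff n p * x ^ n) :=
  ⟨hp, hp.of_norm.hasSum⟩

lemma sub (hp : HasAbsSumAt p x a) (hq : HasAbsSumAt q x b) : HasAbsSumAt (p - q) x (a - b) := by
  simp only [HasAbsSumAt, map_sub, sub_mul]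
  exact ⟨(hp.1.add hq.1).of_nonneg_of_le (fun _ => norm_nonneg _) fun _ => norm_sub_le _ _,
    hp.2.sub hq.2⟩

lemma X_pow (m : ℕ) (x : R) : HasAbsSumAt (X ^ m : R⟦X⟧) x (x ^ m) := by
  have coeff_eq_zero (n : ℕ) (hn : n ≠ m) : coeff n (X ^ m : R⟦X⟧) * x ^ n = 0 := by
    rw [coeff_X_pow, if_neg hn, zero_mul]
  refine ⟨summable_of_ne_finset_zero (s := {m}) fun n hn => ?_, ?_⟩
  · rw [coeff_eq_zero n (by simpa using hn), norm_zero]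
  · simpa [coeff_X_pow] using hasSum_single m coeff_eq_zero

lemma one (x : R) : HasAbsSumAt (1 : R⟦X⟧) x 1 := by
  simpa using X_pow 0 x

lemma exp [NormedAlgebra ℚ R] [CompleteSpace R] (x : R) :
    HasAbsSumAt (PowerSeries.exp R) x (NormedSpace.exp x) := by
  simp only [HasAbsSumAt, coeff_exp, one_div, ← Algebra.smul_def]
  exact ⟨NormedSpace.norm_expSeries_summable' x, NormedSpace.exp_series_hasSum_exp' x⟩

end NormedRing

section NormedCommRing

variable {R : Type*} [NormedCommRing R] [CompleteSpace R] {p q : R⟦X⟧} {x a b : R}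

lemma mul (hp : HasAbsSumAt p x a) (hq : HasAbsSumAt q x b) : HasAbsSumAt (p * q) x (a * b) := by
  have coeff_mul_pow (n : ℕ) : coeff n (p * q) * x ^ n =
      ∑ ij ∈ antidiagonal n, (coeff ij.1 p * x ^ ij.1) * (coeff ij.2 q * x ^ ij.2) := by
    rw [coeff_mul, sum_mul]
    refine sum_congr rfl fun ij hij => ?_
    rw [← mem_antidiagonal.1 hij]
    ring
  have habs : Summable fun n => ‖coeff n (p * q) * x ^ n‖ := by
    simpa only [coeff_mul_pow] using summable_norm_sum_mul_antidiagonal_of_summable_norm hp.1 hq.1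
  convert of_summable_norm habs
  simp only [coeff_mul_pow]
  rw [← tsum_mul_tsum_eq_tsum_sum_antidiagonal_of_summable_norm hp.1 hq.1, hp.2.tsum_eq,
    hq.2.tsum_eq]

lemma pow (hp : HasAbsSumAt p x a) (m : ℕ) : HasAbsSumAt (p ^ m) x (a ^ m) := by
  induction m with
  | zero => simpa using one x
  | succ m ih => simpa only [pow_succ] using ih.mul hp

end NormedCommRing

lemma of_mul_eq {𝕜 : Type*} [NormedField 𝕜] [CompleteSpace 𝕜] {p q r : 𝕜⟦X⟧} {x b c : 𝕜}
    (hp : Summable fun n => ‖coeff n p * x ^ n‖) (hq : HasAbsSumAt q x b)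
    (hr : HasAbsSumAt r x c) (hpq : p * q = r) (hb : b ≠ 0) : HasAbsSumAt p x (c / b) := by
  have hp' := of_summable_norm hp
  have hmul := hp'.mul hq
  rw [hpq] at hmul
  rwa [← hmul.unique hr, mul_div_cancel_right₀ _ hb]

end HasAbsSumAt

lemma summable_norm_mul_pow_of_isBigO {R : Type*} [NormedRing R] [NormOneClass R] {a : ℕ → R}
    {x : R} {r : ℝ} {k : ℕ} (ha : (fun n => ‖a n‖ * r ^ n) =O[atTop] fun n => (n : ℝ) ^ k)
    (hx : ‖x‖ < r) : Summable fun n => ‖a n * x ^ n‖ := by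
  have hr : 0 < r := (norm_nonneg x).trans_lt hx
  have hratio : ‖‖x‖ / r‖ < 1 := by
    rwa [norm_div, norm_norm, Real.norm_of_nonneg hr.le, div_lt_one hr]
  refine summable_of_isBigO_nat (summable_pow_mul_geometric_of_norm_lt_one k hratio) ?_
  refine .trans (.of_norm_le fun n => ?_) (ha.mul (isBigO_refl (fun n => (‖x‖ / r) ^ n) atTop))
  calc ‖‖a n * x ^ n‖‖ ≤ ‖a n‖ * ‖x‖ ^ n := by
        rw [norm_norm]
        exact (norm_mul_le _ _).trans (by gcongr; exact norm_pow_le x n)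
    _ = ‖a n‖ * r ^ n * (‖x‖ / r) ^ n := by
        rw [div_pow]
        field_simp

lemma coeff_sub_X_mul_derivative {R : Type*} [CommRing R] (p : R⟦X⟧) (n : ℕ) :
    coeff n (p - X * derivative R p) = (1 - n) * coeff n p := by
  cases n with
  | zero => simp
  | succ n =>
    rw [map_sub, coeff_succ_X_mul, coeff_derivative]
    push_cast
    ring

end PowerSeriesEvaluation

section Bernoulli

open PowerSeries Asymptotics Filter
open scoped Nat Real

/-- The formal expansion of `x² eˣ / (eˣ - 1)²`, encoded as `B - X B'` where `B` is the exponential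
generating function `X / (e^X - 1)` of the Bernoulli numbers. -/
def bernoulliSqPowerSeries (A : Type*) [CommRing A] [Algebra ℚ A] : A⟦X⟧ :=
  bernoulliPowerSeries A - X * derivative A (bernoulliPowerSeries A)

lemma bernoulliSqPowerSeries_mul_exp_sub_one_sq (A : Type*) [CommRing A] [Algebra ℚ A] :
    bernoulliSqPowerSeries A * (exp A - 1) ^ 2 = X ^ 2 * exp A := by
  have hB := bernoulliPowerSeries_mul_exp_sub_one A
  have hB' := congrArg (derivative A) hB
  simp only [Derivation.leibniz, map_sub, derivative_X, derivative_exp, smul_eq_mul,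
    Derivation.map_one_eq_zero, sub_zero] at hB'
  rw [bernoulliSqPowerSeries]
  linear_combination (exp A - 1 + X * exp A) * hB - X * (exp A - 1) * hB'

lemma coeff_bernoulliSqPowerSeries {K : Type*} [Field K] [CharZero K] (n : ℕ) :
    coeff n (bernoulliSqPowerSeries K) = (1 - n) * (bernoulli n / n !) := by
  simp [bernoulliSqPowerSeries, coeff_sub_X_mul_derivative, bernoulliPowerSeries]

lemma coeff_add_two_bernoulliSqPowerSeries {K : Type*} [Field K] [CharZero K] (k : ℕ) :
    coeff (k + 2) (bernoulliSqPowerSeries K) = -(bernoulli (k + 2) / ((k + 2) * k !)) := by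
  have hk₁ : (k : K) + 1 ≠ 0 := by exact_mod_cast k.succ_ne_zero
  have hk₂ : (k : K) + 2 ≠ 0 := by exact_mod_cast (k + 1).succ_ne_zero
  have hfact : ((k + 2)! : K) = (k + 2) * ((k + 1) * k !) := by
    simp only [Nat.factorial_succ]
    push_cast
    ring
  rw [coeff_bernoulliSqPowerSeries, hfact]
  push_cast
  field_simp
  ring

lemma hasSum_two_mul_one_div_nat_pow {m : ℕ} (hm : m ≠ 0) :
    HasSum (fun n : ℕ => 2 * (1 / (n : ℝ) ^ (2 * m)))
      (|(bernoulli (2 * m) : ℝ)| / (2 * m)! * (2 * π) ^ (2 * m)) := by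
  have hzeta := hasSum_zeta_nat hm
  have htwo : (2 : ℝ) ^ (2 * m) = 2 * 2 ^ (2 * m - 1) := by
    rw [← pow_succ', Nat.sub_add_cancel (by lia)]
  rw [← abs_of_nonneg (hzeta.nonneg fun n => by positivity)] at hzeta
  simp only [abs_div, abs_mul, abs_pow, abs_neg, abs_one, one_pow, one_mul, Nat.abs_cast,
    abs_of_pos Real.pi_pos, abs_two] at hzeta
  have hvalue : |(bernoulli (2 * m) : ℝ)| / (2 * m)! * (2 * π) ^ (2 * m) =
      2 * (2 ^ (2 * m - 1) * π ^ (2 * m) * |(bernoulli (2 * m) : ℝ)| / (2 * m)!) := by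
    rw [mul_pow, htwo]
    ring
  exact hvalue ▸ hzeta.mul_left 2

lemma abs_bernoulli_div_factorial_mul_two_pi_pow_le (n : ℕ) :
    |(bernoulli n : ℝ)| / n ! * (2 * π) ^ n ≤ 4 := by
  rcases n.even_or_odd with heven | hodd
  · obtain ⟨m, rfl⟩ := heven.two_dvd
    rcases eq_or_ne m 0 with rfl | hm
    · simp
    have hle : |(bernoulli (2 * m) : ℝ)| / (2 * m)! * (2 * π) ^ (2 * m) ≤ 2 * (π ^ 2 / 6) :=
      hasSum_mono (hasSum_two_mul_one_div_nat_pow hm) (hasSum_zeta_two.mul_left 2) fun i => by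
        rcases eq_or_ne i 0 with rfl | hi
        · simp [hm]
        · have hi_one : (1 : ℝ) ≤ i := by exact_mod_cast Nat.one_le_iff_ne_zero.2 hi
          gcongr
          lia
    nlinarith [Real.pi_lt_d2, Real.pi_pos]
  · rcases eq_or_ne n 1 with rfl | hn
    · have hvalue : |((bernoulli 1 : ℚ) : ℝ)| / 1 ! * (2 * π) ^ 1 = π := by simp [abs_div]
      exact hvalue.trans_le Real.pi_le_four
    · simp [bernoulli_eq_zero_of_odd hodd (by grind)]

lemma isBigO_norm_coeff_bernoulliSqPowerSeries :
    (fun n => ‖coeff n (bernoulliSqPowerSeries ℂ)‖ * (2 * π) ^ n) =O[atTop]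
      fun n => (n : ℝ) ^ 1 := by
  refine .of_bound 4 ((eventually_ge_atTop 1).mono fun n hn => ?_)
  have hnorm : ‖coeff n (bernoulliSqPowerSeries ℂ)‖ = (n - 1) * (|(bernoulli n : ℝ)| / n !) := by
    have hnorm_sub : ‖(1 - n : ℂ)‖ = n - 1 := by
      rw [norm_sub_rev, ← Nat.cast_one, ← Nat.cast_sub hn, Complex.norm_natCast, Nat.cast_sub hn,
        Nat.cast_one]
    rw [coeff_bernoulliSqPowerSeries, norm_mul, norm_div, hnorm_sub, Complex.norm_natCast,
      Complex.norm_ratCast]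
  have hbound := abs_bernoulli_div_factorial_mul_two_pi_pow_le n
  rw [Real.norm_of_nonneg (by positivity), Real.norm_of_nonneg (by positivity), hnorm, pow_one]
  calc (n - 1) * (|(bernoulli n : ℝ)| / n !) * (2 * π) ^ n
      = (n - 1) * (|(bernoulli n : ℝ)| / n ! * (2 * π) ^ n) := mul_assoc _ _ _
    _ ≤ n * 4 := by gcongr; linarith
    _ = 4 * n := mul_comm _ _

lemma exp_ne_one_of_norm_lt_two_pi {x : ℂ} (hx0 : x ≠ 0) (hx : ‖x‖ < 2 * π) :
    Complex.exp x ≠ 1 := by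
  rw [Ne, Complex.exp_eq_one_iff]
  rintro ⟨n, rfl⟩
  have hn : n ≠ 0 := by
    rintro rfl
    simp at hx0
  have hn_one : (1 : ℝ) ≤ |(n : ℝ)| := by exact_mod_cast Int.one_le_abs hn
  refine hx.not_ge ?_
  calc 2 * π ≤ |(n : ℝ)| * (2 * π) := le_mul_of_one_le_left Real.two_pi_pos.le hn_one
    _ = ‖(n : ℂ) * (2 * π * Complex.I)‖ := by simp [abs_of_pos Real.pi_pos]

lemma hasAbsSumAt_bernoulliSqPowerSeries {x : ℂ} (hx0 : x ≠ 0) (hx : ‖x‖ < 2 * π) :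
    HasAbsSumAt (bernoulliSqPowerSeries ℂ) x
      (x ^ 2 * Complex.exp x / (Complex.exp x - 1) ^ 2) := by
  have hexp : HasAbsSumAt (exp ℂ) x (Complex.exp x) := by
    simpa only [Complex.exp_eq_exp_ℂ] using HasAbsSumAt.exp x
  exact .of_mul_eq (summable_norm_mul_pow_of_isBigO isBigO_norm_coeff_bernoulliSqPowerSeries hx)
    ((hexp.sub (.one x)).pow 2) ((HasAbsSumAt.X_pow 2 x).mul hexp)
    (bernoulliSqPowerSeries_mul_exp_sub_one_sq ℂ)
    (pow_ne_zero 2 (sub_ne_zero.2 (exp_ne_one_of_norm_lt_two_pi hx0 hx)))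

end Bernoulli

theorem bernoulli_series_identity (x : ℂ) (hx0 : 0 < ‖x‖) (hx : ‖x‖ < 2 * Real.pi) :
    Summable (fun k : ℕ =>
      ‖((bernoulli (k + 2) : ℂ) / (((k : ℂ) + 2) * (Nat.factorial k : ℂ))) * x ^ (k + 2)‖) ∧
    x ^ 2 * Complex.exp x / (Complex.exp x - 1) ^ 2 =
      1 - ∑' k : ℕ,
        ((bernoulli (k + 2) : ℂ) / (((k : ℂ) + 2) * (Nat.factorial k : ℂ))) * x ^ (k + 2) := by
  obtain ⟨habs, hsum⟩ := hasAbsSumAt_bernoulliSqPowerSeries (norm_pos_iff.1 hx0) hx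
  have hterm (k : ℕ) :
      ((bernoulli (k + 2) : ℂ) / (((k : ℂ) + 2) * (Nat.factorial k : ℂ))) * x ^ (k + 2) =
        -(PowerSeries.coeff (k + 2) (bernoulliSqPowerSeries ℂ) * x ^ (k + 2)) := by
    rw [coeff_add_two_bernoulliSqPowerSeries, neg_mul, neg_neg]
  simp only [hterm, norm_neg, tsum_neg, sub_neg_eq_add]
  refine ⟨(summable_nat_add_iff 2).2 habs, ?_⟩
  rw [← hsum.tsum_eq, ← hsum.summable.sum_add_tsum_nat_add 2]
  simp [Finset.sum_range_succ, coeff_bernoulliSqPowerSeries]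
end
end
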